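/- arXiv:1703.01628 — 4 statements merged into one kernel-verified Lean document; each statement's English description precedes it below -/
import Mathlib

section
/- Let w(t) = log|(1+t)/(1−t)| for t > 0, t ≠ 1. For every ζ ∈ ℂ with −1 < Re ζ < 1 and ζ ≠ 0, the function t ↦ t^{ζ−1} w(t) is integrable on (0,∞) and ∫₀^∞ t^{ζ} w(t) dt/t = (π/ζ) · tan(πζ/2). -/
open MeasureTheory

/-!
The kernel `w(t) = log |(1 + t) / (1 - t)|` is invariant under `t ↦ t⁻¹`, so its Mellin transform
at `ζ` is `M(ζ) + M(-ζ)`, where `M` is the Mellin transform of `w` restricted to `(0, 1)`. There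
`w(t) = ∑ 2 t^(2k+1) / (2k+1)`, and integrating term by term gives
`M(ζ) = ∑ 2 / ((2k+1) (ζ+2k+1))`. The terms of `M(ζ) + M(-ζ)` combine to `4 / ((2k+1)² - ζ²)`, and
`∑ 4ζ / ((2k+1)² - ζ²) = π tan(πζ/2)` is the Mittag-Leffler expansion of the cotangent at
`(1 - ζ) / 2`, with its terms paired differently.
-/

open Set Filter Topology

section TermwiseIntegration

variable {α ι E : Type*} [MeasurableSpace α] {μ : Measure α} [Countable ι] [NormedAddCommGroup E]
  {F : ι → α → E} {f : α → E}

lemma integrable_of_hasSum_of_summable_integral_norm (hF : ∀ i, Integrable (F i) μ)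
    (hF_sum : Summable fun i => ∫ a, ‖F i a‖ ∂μ) (hf : ∀ᵐ a ∂μ, HasSum (F · a) (f a)) :
    Integrable f μ := by
  refine ⟨aestronglyMeasurable_of_tendsto_ae atTop
    (fun s => Finset.aestronglyMeasurable_fun_sum s fun i _ => (hF i).1) hf, ?_⟩
  calc ∫⁻ a, ‖f a‖ₑ ∂μ
      ≤ ∫⁻ a, ∑' i, ‖F i a‖ₑ ∂μ := by
        refine lintegral_mono_ae (hf.mono fun a ha => ?_)
        rw [← ha.tsum_eq]
        exact enorm_tsum_le_tsum_enorm
    _ = ∑' i, ENNReal.ofReal (∫ a, ‖F i a‖ ∂μ) := by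
        rw [lintegral_tsum fun i => (hF i).1.enorm]
        simp only [ofReal_integral_norm_eq_lintegral_enorm (hF _)]
    _ < ⊤ := hF_sum.tsum_ofReal_lt_top

lemma hasSum_integral_of_hasSum_of_summable_integral_norm [NormedSpace ℝ E]
    (hF : ∀ i, Integrable (F i) μ) (hF_sum : Summable fun i => ∫ a, ‖F i a‖ ∂μ)
    (hf : ∀ᵐ a ∂μ, HasSum (F · a) (f a)) :
    HasSum (fun i => ∫ a, F i a ∂μ) (∫ a, f a ∂μ) := by
  rw [← integral_congr_ae (hf.mono fun a ha => ha.tsum_eq)]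
  exact hasSum_integral_of_summable_integral_norm hF hF_sum

end TermwiseIntegration

section PowersOnUnitInterval

variable {s : ℂ}

lemma integrableOn_Ioo_cpow_sub_one (hs : 0 < s.re) :
    IntegrableOn (fun t : ℝ => (t : ℂ) ^ (s - 1)) (Ioo 0 1) :=
  (intervalIntegrable_iff_integrableOn_Ioo_of_le zero_le_one).1
    (intervalIntegral.intervalIntegrable_cpow' (by simpa using hs))

lemma integral_Ioo_cpow_sub_one (hs : 0 < s.re) :
    ∫ t in Ioo (0 : ℝ) 1, (t : ℂ) ^ (s - 1) = s⁻¹ := by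
  rw [← integral_Ioc_eq_integral_Ioo, ← intervalIntegral.integral_of_le zero_le_one,
    integral_cpow (Or.inl (by simpa using hs))]
  simp [Complex.zero_cpow (Complex.ne_zero_of_re_pos hs)]

lemma integral_Ioo_norm_cpow_sub_one (hs : 0 < s.re) :
    ∫ t in Ioo (0 : ℝ) 1, ‖(t : ℂ) ^ (s - 1)‖ = s.re⁻¹ := by
  have norm_eq : EqOn (fun t : ℝ => ‖(t : ℂ) ^ (s - 1)‖) (fun t => t ^ (s.re - 1)) (Ioo 0 1) :=
    fun t ht => by simp [Complex.norm_cpow_eq_rpow_re_of_pos ht.1]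
  rw [setIntegral_congr_fun measurableSet_Ioo norm_eq, ← integral_Ioc_eq_integral_Ioo,
    ← intervalIntegral.integral_of_le zero_le_one, integral_rpow (Or.inl (by linarith))]
  simp [Real.zero_rpow hs.ne']

end PowersOnUnitInterval

section Mellin

variable {ι E : Type*} [NormedAddCommGroup E] [NormedSpace ℂ E] {f : ℝ → E} {s : ℂ}

lemma cpow_smul_indicator (S : Set ℝ) (f : ℝ → E) (s : ℂ) :
    (fun t : ℝ => (t : ℂ) ^ s • S.indicator f t) =
      S.indicator fun t : ℝ => (t : ℂ) ^ s • f t :=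
  funext fun t => (indicator_smul_apply S (fun t : ℝ => (t : ℂ) ^ s) f t).symm

lemma mellinConvergent_indicator_iff {S : Set ℝ} (hS : MeasurableSet S) (hS_pos : S ⊆ Ioi 0) :
    MellinConvergent (S.indicator f) s ↔
      IntegrableOn (fun t : ℝ => (t : ℂ) ^ (s - 1) • f t) S := by
  rw [MellinConvergent, cpow_smul_indicator, IntegrableOn, integrable_indicator_iff hS,
    IntegrableOn, Measure.restrict_restrict hS, inter_eq_left.2 hS_pos, IntegrableOn]

lemma mellin_indicator {S : Set ℝ} (hS : MeasurableSet S) (hS_pos : S ⊆ Ioi 0) :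
    mellin (S.indicator f) s = ∫ t in S, (t : ℂ) ^ (s - 1) • f t := by
  rw [mellin, cpow_smul_indicator, setIntegral_indicator hS, inter_eq_right.2 hS_pos]

lemma mellinConvergent_comp_inv :
    MellinConvergent (fun t => f t⁻¹) s ↔ MellinConvergent f (-s) := by
  simpa [Real.rpow_neg_one, div_neg] using
    MellinConvergent.comp_rpow (f := f) (s := s) (neg_ne_zero.2 one_ne_zero)

lemma hasMellin_of_indicator_Ioo (hf : MellinConvergent ((Ioo 0 1).indicator f) s)
    (hf_inv : MellinConvergent ((Ioo 0 1).indicator fun t => f t⁻¹) (-s)) :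
    HasMellin f s (mellin ((Ioo 0 1).indicator f) s +
      mellin ((Ioo 0 1).indicator fun t => f t⁻¹) (-s)) := by
  have split_at_one : ∀ᵐ t : ℝ ∂volume.restrict (Ioi (0 : ℝ)), (t : ℂ) ^ (s - 1) •
      ((Ioo 0 1).indicator f t + (Ioo 0 1).indicator (fun t => f t⁻¹) t⁻¹) =
        (t : ℂ) ^ (s - 1) • f t := by
    filter_upwards [ae_restrict_mem measurableSet_Ioi, Measure.ae_ne _ 1] with t ht ht_ne
    have t_pos : 0 < t := ht
    congr 1
    rcases ht_ne.lt_or_gt with t_lt | t_gt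
    · have := (one_lt_inv₀ t_pos).2 t_lt
      simp [t_pos, t_lt, this.le]
    · have := inv_lt_one_of_one_lt₀ t_gt
      simp [t_pos, t_gt.le, this]
  have sum_hasMellin := hasMellin_add hf (mellinConvergent_comp_inv.2 hf_inv)
  rw [mellin_comp_inv] at sum_hasMellin
  exact ⟨sum_hasMellin.1.congr split_at_one,
    (integral_congr_ae split_at_one).symm.trans sum_hasMellin.2⟩

variable [CompleteSpace E] [Countable ι] {a : ι → E} {p : ι → ℂ}

lemma mellinConvergent_and_hasSum_mellin_indicator_Ioo (hp : ∀ i, 0 < (s + p i).re)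
    (hf : ∀ t ∈ Ioo (0 : ℝ) 1, HasSum (fun i => (t : ℂ) ^ p i • a i) (f t))
    (ha : Summable fun i => (s + p i).re⁻¹ * ‖a i‖) :
    MellinConvergent ((Ioo 0 1).indicator f) s ∧
      HasSum (fun i => (s + p i)⁻¹ • a i) (mellin ((Ioo 0 1).indicator f) s) := by
  let F (i : ι) (t : ℝ) : E := (t : ℂ) ^ (s + p i - 1) • a i
  have F_integrable (i : ι) : IntegrableOn (F i) (Ioo 0 1) :=
    (integrableOn_Ioo_cpow_sub_one (hp i)).smul_const (a i)
  have integral_norm_F (i : ι) : ∫ t in Ioo (0 : ℝ) 1, ‖F i t‖ = (s + p i).re⁻¹ * ‖a i‖ := by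
    simp only [F, norm_smul, integral_mul_const, integral_Ioo_norm_cpow_sub_one (hp i)]
  have integral_F (i : ι) : ∫ t in Ioo (0 : ℝ) 1, F i t = (s + p i)⁻¹ • a i := by
    rw [integral_smul_const, integral_Ioo_cpow_sub_one (hp i)]
  have F_hasSum : ∀ᵐ t ∂volume.restrict (Ioo (0 : ℝ) 1),
      HasSum (F · t) ((t : ℂ) ^ (s - 1) • f t) := by
    filter_upwards [ae_restrict_mem measurableSet_Ioo] with t ht
    have t_ne : (t : ℂ) ≠ 0 := Complex.ofReal_ne_zero.2 ht.1.ne'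
    simpa only [F, smul_smul, ← Complex.cpow_add _ _ t_ne, sub_add_eq_add_sub] using
      (hf t ht).const_smul ((t : ℂ) ^ (s - 1))
  have F_summable : Summable fun i => ∫ t in Ioo (0 : ℝ) 1, ‖F i t‖ := by
    simpa only [integral_norm_F] using ha
  rw [mellinConvergent_indicator_iff measurableSet_Ioo Ioo_subset_Ioi_self,
    mellin_indicator measurableSet_Ioo Ioo_subset_Ioi_self]
  simp only [← integral_F]
  exact ⟨integrable_of_hasSum_of_summable_integral_norm F_integrable F_summable F_hasSum,
    hasSum_integral_of_hasSum_of_summable_integral_norm F_integrable F_summable F_hasSum⟩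

end Mellin

section PartialFractions

open Complex

lemma hasSum_one_div_add_sub_one_div_add_succ {x : ℂ} (hx : ∀ n : ℕ, x + n ≠ 0) :
    HasSum (fun n : ℕ => 1 / (x + n) - 1 / (x + (n + 1))) (1 / x) := by
  have term_eq (n : ℕ) : ((x + n + 1) * (x + n))⁻¹ = 1 / (x + n) - 1 / (x + (n + 1)) := by
    have h₀ := hx n
    have h₁ : x + (n + 1) ≠ 0 := mod_cast hx (n + 1)
    rw [add_assoc]
    field_simp
    ring
  have terms_summable : Summable fun n : ℕ => 1 / (x + n) - 1 / (x + (n + 1)) := by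
    refine ((EisensteinSeries.summable_linear_right_add_one_mul_linear_right x 1 1).comp_injective
      Nat.cast_injective).congr fun n => ?_
    simp only [← term_eq, Function.comp_apply, Int.cast_one, one_mul, Int.cast_natCast]
  have tendsto_zero : Tendsto (fun n : ℕ => 1 / (x + n)) atTop (𝓝 0) := by
    simpa only [one_div, Function.comp_def] using tendsto_inv₀_cobounded.comp
      ((tendsto_const_add_cobounded x).comp tendsto_natCast_atTop_cobounded)
  rw [terms_summable.hasSum_iff_tendsto_nat]
  have partial_sum (N : ℕ) :
      ∑ n ∈ Finset.range N, (1 / (x + n) - 1 / (x + (n + 1))) = 1 / x - 1 / (x + N) := by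
    simpa using Finset.sum_range_sub' (fun n : ℕ => 1 / (x + n)) N
  simpa only [partial_sum, sub_zero] using tendsto_zero.const_sub (1 / x)

lemma hasSum_pi_mul_cot_pi_mul {x : ℂ} (hx : x ∈ integerComplement) :
    HasSum (fun n : ℕ => 1 / (x + n) + 1 / (x - (n + 1))) (Real.pi * cot (Real.pi * x)) := by
  have cotTerm_hasSum : HasSum (cotTerm x) (Real.pi * cot (Real.pi * x) - 1 / x) :=
    (summable_cotTerm hx).hasSum_iff_tendsto_nat.2 (tendsto_logDeriv_euler_cot_sub hx)
  have telescoping := hasSum_one_div_add_sub_one_div_add_succ fun n =>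
    mod_cast integerComplement_add_ne_zero hx n
  convert cotTerm_hasSum.add telescoping using 1
  · ext n
    rw [cotTerm]
    ring
  · ring

lemma one_sub_div_two_mem_integerComplement {ζ : ℂ} (hζ : cos (Real.pi * ζ / 2) ≠ 0) :
    (1 - ζ) / 2 ∈ integerComplement := by
  rintro ⟨n, hn⟩
  apply hζ
  rw [← sin_pi_div_two_sub, show (Real.pi / 2 - Real.pi * ζ / 2 : ℂ) = n * Real.pi by
    rw [hn]; ring, sin_int_mul_pi]

lemma hasSum_pi_mul_tan {ζ : ℂ} (hζ : cos (Real.pi * ζ / 2) ≠ 0) :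
    HasSum (fun k : ℕ => 4 * ζ / ((2 * k + 1) ^ 2 - ζ ^ 2))
      (Real.pi * tan (Real.pi * ζ / 2)) := by
  have hx := one_sub_div_two_mem_integerComplement hζ
  have cot_eq_tan : cot (Real.pi * ((1 - ζ) / 2)) = tan (Real.pi * ζ / 2) := by
    rw [show Real.pi * ((1 - ζ) / 2) = Real.pi / 2 - Real.pi * ζ / 2 by ring, cot,
      cos_pi_div_two_sub, sin_pi_div_two_sub, tan]
  rw [← cot_eq_tan]
  convert! hasSum_pi_mul_cot_pi_mul hx using 2 with k
  have sub_ne : 2 * k + 1 - ζ ≠ 0 := fun h =>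
    integerComplement_add_ne_zero hx k (by push_cast; linear_combination h / 2)
  have add_ne : 2 * k + 1 + ζ ≠ 0 := fun h =>
    integerComplement_add_ne_zero hx (-(k + 1)) (by push_cast; linear_combination -h / 2)
  rw [show (1 - ζ) / 2 + k = (2 * k + 1 - ζ) / 2 by ring,
    show (1 - ζ) / 2 - (k + 1) = -(2 * k + 1 + ζ) / 2 by ring,
    show (2 * k + 1 : ℂ) ^ 2 - ζ ^ 2 = (2 * k + 1 - ζ) * (2 * k + 1 + ζ) by ring]
  field_simp
  ring

lemma cos_pi_mul_div_two_ne_zero {ζ : ℂ} (h1 : -1 < ζ.re) (h2 : ζ.re < 1) :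
    cos (Real.pi * ζ / 2) ≠ 0 := by
  rw [cos_ne_zero_iff]
  intro n hn
  have hζ : ζ = (2 * n + 1 : ℤ) := by
    apply mul_left_cancel₀ (ofReal_ne_zero.2 Real.pi_ne_zero)
    push_cast
    linear_combination 2 * hn
  rw [hζ, intCast_re] at h1 h2
  norm_cast at h1 h2
  lia

end PartialFractions

/-- The kernel `w(t) = log |(1 + t) / (1 - t)|`, with the junk value `w(1) = log 0 = 0`. It is
taken complex-valued so that its Mellin transform can be formed. -/
noncomputable def logKernel (t : ℝ) : ℂ := Real.log |(1 + t) / (1 - t)|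

section LogKernel

lemma re_add_two_mul_add_one_pos {ζ : ℂ} (hζ : -1 < ζ.re) (k : ℕ) :
    0 < (ζ + (2 * k + 1)).re := by
  suffices 0 < ζ.re + (2 * k + 1) by simpa
  linarith [k.cast_nonneg (α := ℝ)]

lemma logKernel_inv (t : ℝ) : logKernel t⁻¹ = logKernel t := by
  rcases eq_or_ne t 0 with rfl | t_ne
  · simp
  have quotient_inv : (1 + t⁻¹) / (1 - t⁻¹) = -((1 + t) / (1 - t)) := by
    rw [← mul_div_mul_left _ _ t_ne, mul_add, mul_sub, mul_inv_cancel₀ t_ne, ← div_neg]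
    ring
  rw [logKernel, quotient_inv, abs_neg, logKernel]

lemma hasSum_logKernel {t : ℝ} (ht : |t| < 1) :
    HasSum (fun k : ℕ => (t : ℂ) ^ (2 * k + 1 : ℂ) • (2 / (2 * k + 1) : ℂ)) (logKernel t) := by
  obtain ⟨neg_one_lt, lt_one⟩ := abs_lt.1 ht
  rw [logKernel, Real.log_abs, Real.log_div (by linarith) (by linarith)]
  convert! Complex.hasSum_ofReal.2 (Real.hasSum_log_sub_log_of_abs_lt_one ht) using 2 with k
  have cpow_eq_pow : (t : ℂ) ^ (2 * k + 1 : ℂ) = (t : ℂ) ^ (2 * k + 1) :=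
    mod_cast Complex.cpow_natCast (t : ℂ) (2 * k + 1)
  rw [cpow_eq_pow]
  push_cast
  rw [smul_eq_mul]
  ring

lemma summable_inv_mul_two_div {x : ℝ} (hx : -1 < x) :
    Summable fun k : ℕ => (x + (2 * k + 1))⁻¹ * (2 / (2 * k + 1)) := by
  rw [← summable_nat_add_iff 1]
  refine Summable.of_nonneg_of_le (fun k => ?_) (fun k => ?_)
    ((summable_nat_add_iff 1).2 (Real.summable_one_div_nat_pow.2 one_lt_two))
  · have : 0 < x + (2 * (k + 1 : ℕ) + 1) := by push_cast; linarith [k.cast_nonneg (α := ℝ)]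
    positivity
  · have : (0 : ℝ) ≤ k := k.cast_nonneg
    push_cast
    rw [inv_mul_eq_div, div_div, div_le_div_iff₀ (by apply mul_pos <;> linarith) (by positivity)]
    nlinarith

lemma mellinConvergent_and_hasSum_mellin_logKernel_Ioo {ζ : ℂ} (hζ : -1 < ζ.re) :
    MellinConvergent ((Ioo 0 1).indicator logKernel) ζ ∧
      HasSum (fun k : ℕ => (ζ + (2 * k + 1))⁻¹ • (2 / (2 * k + 1) : ℂ))
        (mellin ((Ioo 0 1).indicator logKernel) ζ) := by
  have norm_coeff (k : ℕ) : ‖(2 / (2 * k + 1) : ℂ)‖ = 2 / (2 * k + 1) := by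
    simpa using Complex.norm_of_nonneg (show (0 : ℝ) ≤ 2 / (2 * k + 1) by positivity)
  refine mellinConvergent_and_hasSum_mellin_indicator_Ioo (re_add_two_mul_add_one_pos hζ)
    (fun t ht => hasSum_logKernel (abs_lt.2 ⟨by linarith [ht.1], ht.2⟩)) ?_
  simp only [norm_coeff]
  simpa using summable_inv_mul_two_div hζ

lemma hasMellin_logKernel {ζ : ℂ} (h1 : -1 < ζ.re) (h2 : ζ.re < 1) :
    HasMellin logKernel ζ (∑' k : ℕ, 4 / ((2 * k + 1) ^ 2 - ζ ^ 2)) := by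
  obtain ⟨conv, sum⟩ := mellinConvergent_and_hasSum_mellin_logKernel_Ioo h1
  have neg_re_gt : -1 < (-ζ).re := by simpa using h2
  obtain ⟨conv_neg, sum_neg⟩ := mellinConvergent_and_hasSum_mellin_logKernel_Ioo neg_re_gt
  have hasMellin_add_neg := hasMellin_of_indicator_Ioo conv
    (by simpa only [logKernel_inv] using conv_neg)
  simp only [logKernel_inv] at hasMellin_add_neg
  rw [← (sum.add sum_neg).tsum_eq] at hasMellin_add_neg
  convert! hasMellin_add_neg using 3 with k
  have add_ne := Complex.ne_zero_of_re_pos (re_add_two_mul_add_one_pos h1 k)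
  have sub_ne := Complex.ne_zero_of_re_pos (re_add_two_mul_add_one_pos neg_re_gt k)
  have odd_ne : (2 * k + 1 : ℂ) ≠ 0 := mod_cast (2 * k).succ_ne_zero
  rw [show (2 * k + 1 : ℂ) ^ 2 - ζ ^ 2 = (ζ + (2 * k + 1)) * (-ζ + (2 * k + 1)) by ring,
    smul_eq_mul, smul_eq_mul]
  field_simp
  ring

end LogKernel

/-- The Mellin transform of `w(t) = log|(1+t)/(1−t)|`: for `ζ ∈ ℂ` with
`−1 < Re ζ < 1`, `ζ ≠ 0`, the function `t ↦ t^{ζ−1} w(t)` is integrable on `(0,∞)` and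
`∫₀^∞ t^ζ w(t) dt/t = (π/ζ) tan(πζ/2)`. -/
theorem mellin_log_kernel (ζ : ℂ) (h1 : -1 < ζ.re) (h2 : ζ.re < 1) (h0 : ζ ≠ 0) :
    IntegrableOn
      (fun t : ℝ => (t : ℂ) ^ (ζ - 1) * (Real.log |(1 + t) / (1 - t)| : ℂ))
      (Set.Ioi 0) ∧
    ∫ t in Set.Ioi (0:ℝ), (t : ℂ) ^ (ζ - 1) * (Real.log |(1 + t) / (1 - t)| : ℂ)
      = ((Real.pi : ℂ) / ζ) * Complex.tan (Real.pi * ζ / 2) := by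
  obtain ⟨integrable, integral_eq⟩ := hasMellin_logKernel h1 h2
  refine ⟨integrable, integral_eq.trans ?_⟩
  have tan_expansion := hasSum_pi_mul_tan (cos_pi_mul_div_two_ne_zero h1 h2)
  rw [div_mul_eq_mul_div, ← tan_expansion.tsum_eq, eq_div_iff h0, ← tsum_mul_right]
  exact tsum_congr fun k => by ring
end

section
/- Let w(t) = log|(1+t)/(1−t)| for t > 0, t ≠ 1, and let τ : (0,∞) → ℂ be a smooth function with compact support contained in (0,∞). Then the Mellin transform ℳ(wτ)(ζ) = ∫₀^∞ t^{ζ−1} w(t) τ(t) dt extends to an entire function of ζ, and for all real numbers c < d and every integer l ≥ 0 one has sup { (1+|Im ζ|)^{l+1} · |(d/dζ)^l ℳ(wτ)(ζ)| : ζ ∈ ℂ, c ≤ Re ζ ≤ d } < ∞. -/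
open MeasureTheory

/-!
The substitution `t = exp x` turns the Mellin transform into the bilateral Laplace transform
`L g ζ = ∫ exp (ζ x) g x dx` of a function `g = log |x| φ + σ` with test functions `φ`, `σ`.

* Since `x g` is continuous, integration by parts gives `ζ (L g)' = -L ((x g)')`, where `(x g)'`
  is again of the form `log |x| φ₁ + σ₁`.
* Consequently `H = ζ L g + L (log |x| φ' + σ')` satisfies `H' = -L φ`. As `L φ` decays rapidly on
  vertical strips, `H` is bounded there, and hence `L g = O(1 / (1 + |Im ζ|))`.
* Differentiating the first identity `l` times gives
  `ζ (L g)⁽ˡ⁺¹⁾ = -l (L g)⁽ˡ⁾ - (L ((x g)'))⁽ˡ⁾`, so each derivative gains one order of decay.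
-/

section

open Set Filter Topology
open scoped ContDiff

section StripDecay

variable {E : Type*} [NormedAddCommGroup E] {F G : ℂ → E} {n : ℕ}

lemma exists_norm_ofReal_le_of_continuous (hF : Continuous F) (M : ℝ) :
    ∃ C : ℝ, ∀ σ : ℝ, |σ| ≤ M → ‖F σ‖ ≤ C := by
  obtain ⟨C, hC⟩ := (isCompact_Icc (a := -M) (b := M)).exists_bound_of_continuousOn
    (f := fun σ : ℝ ↦ F σ) (by fun_prop)
  exact ⟨C, fun σ hσ ↦ hC σ (abs_le.1 hσ)⟩

lemma norm_vertical_sub_le_pi_mul_of_deriv [NormedSpace ℂ E] [CompleteSpace E]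
    (hF : Differentiable ℂ F) {C σ : ℝ}
    (hC : ∀ s : ℝ, (1 + |s|) ^ 2 * ‖deriv F (σ + s * Complex.I)‖ ≤ C) (η : ℝ) :
    ‖F (σ + η * Complex.I) - F σ‖ ≤ Real.pi * C := by
  have hderiv (s : ℝ) : HasDerivAt (fun s : ℝ ↦ F (σ + s * Complex.I))
      (Complex.I • deriv F (σ + s * Complex.I)) s := by
    have hline : HasDerivAt (fun s : ℝ ↦ (σ + s * Complex.I : ℂ)) Complex.I s := by
      simpa using ((Complex.ofRealCLM.hasDerivAt (x := s)).mul_const Complex.I).const_add (σ : ℂ)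
    exact (hF _).hasDerivAt.scomp s hline
  have hcont : Continuous (deriv F) := (hF.contDiff (n := 1)).continuous_deriv le_rfl
  have hbound (s : ℝ) : ‖Complex.I • deriv F (σ + s * Complex.I)‖ ≤ C * (1 + s ^ 2)⁻¹ := by
    rw [norm_smul, Complex.norm_I, one_mul, ← div_eq_mul_inv, le_div_iff₀ (by positivity),
      mul_comm]
    refine le_trans ?_ (hC s)
    gcongr
    nlinarith [sq_abs s, abs_nonneg s]
  have hC₀ : 0 ≤ C := (by positivity : (0 : ℝ) ≤ _).trans (hC 0)
  have hint : Integrable (fun s : ℝ ↦ C * (1 + s ^ 2)⁻¹) := integrable_inv_one_add_sq.const_mul C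
  calc ‖F (σ + η * Complex.I) - F σ‖
      = ‖∫ s in (0 : ℝ)..η, Complex.I • deriv F (σ + s * Complex.I)‖ := by
        rw [intervalIntegral.integral_eq_sub_of_hasDerivAt (fun s _ ↦ hderiv s)
          (Continuous.intervalIntegrable (by fun_prop) _ _)]
        simp
    _ ≤ ∫ s in uIoc 0 η, C * (1 + s ^ 2)⁻¹ :=
        (intervalIntegral.norm_integral_le_integral_norm_uIoc).trans <|
          integral_mono_of_nonneg (.of_forall fun _ ↦ norm_nonneg _) hint.integrableOn
            (.of_forall hbound)
    _ ≤ ∫ s, C * (1 + s ^ 2)⁻¹ :=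
        setIntegral_le_integral hint (.of_forall fun s ↦ by positivity)
    _ = Real.pi * C := by rw [integral_const_mul, integral_univ_inv_one_add_sq, mul_comm]

/-- `F` is `O((1 + |Im ζ|)⁻ⁿ)` uniformly on every vertical strip; the strips are taken symmetric,
`|Re ζ| ≤ M`, which is no restriction. For `n = 0` this is boundedness on vertical strips. -/
def DecaysOnStrips (n : ℕ) (F : ℂ → E) : Prop :=
  ∀ M : ℝ, ∃ C : ℝ, ∀ ζ : ℂ, |ζ.re| ≤ M → (1 + |ζ.im|) ^ n * ‖F ζ‖ ≤ C

namespace DecaysOnStrips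

lemma sub (hF : DecaysOnStrips n F) (hG : DecaysOnStrips n G) :
    DecaysOnStrips n (fun ζ ↦ F ζ - G ζ) := by
  intro M
  obtain ⟨C, hC⟩ := hF M
  obtain ⟨D, hD⟩ := hG M
  refine ⟨C + D, fun ζ hζ ↦ ?_⟩
  calc (1 + |ζ.im|) ^ n * ‖F ζ - G ζ‖
      ≤ (1 + |ζ.im|) ^ n * (‖F ζ‖ + ‖G ζ‖) := by gcongr; exact norm_sub_le _ _
    _ ≤ C + D := by rw [mul_add]; exact add_le_add (hC ζ hζ) (hD ζ hζ)

variable [NormedSpace ℂ E]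

lemma const_smul (hF : DecaysOnStrips n F) (a : ℂ) : DecaysOnStrips n (fun ζ ↦ a • F ζ) := by
  intro M
  obtain ⟨C, hC⟩ := hF M
  refine ⟨‖a‖ * C, fun ζ hζ ↦ ?_⟩
  rw [norm_smul, mul_left_comm]
  gcongr
  exact hC ζ hζ

lemma succ_of_id_smul (hF : DecaysOnStrips n F) (hF' : DecaysOnStrips n (fun ζ ↦ ζ • F ζ)) :
    DecaysOnStrips (n + 1) F := by
  intro M
  obtain ⟨C, hC⟩ := hF M
  obtain ⟨D, hD⟩ := hF' M
  refine ⟨C + D, fun ζ hζ ↦ ?_⟩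
  calc (1 + |ζ.im|) ^ (n + 1) * ‖F ζ‖
      = (1 + |ζ.im|) ^ n * ‖F ζ‖ + (1 + |ζ.im|) ^ n * (|ζ.im| * ‖F ζ‖) := by ring
    _ ≤ (1 + |ζ.im|) ^ n * ‖F ζ‖ + (1 + |ζ.im|) ^ n * ‖ζ • F ζ‖ := by
      rw [norm_smul]
      gcongr
      exact Complex.abs_im_le_norm ζ
    _ ≤ C + D := add_le_add (hC ζ hζ) (hD ζ hζ)

lemma zero_of_deriv [CompleteSpace E] (hF : Differentiable ℂ F)
    (hF' : DecaysOnStrips 2 (deriv F)) : DecaysOnStrips 0 F := by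
  intro M
  obtain ⟨C, hC⟩ := hF' M
  obtain ⟨B, hB⟩ := exists_norm_ofReal_le_of_continuous hF.continuous M
  refine ⟨B + Real.pi * C, fun ζ hζ ↦ ?_⟩
  have hvert : ‖F ζ - F ζ.re‖ ≤ Real.pi * C := by
    have hline := norm_vertical_sub_le_pi_mul_of_deriv hF (σ := ζ.re)
      (fun s ↦ by simpa using hC (ζ.re + s * Complex.I) (by simpa)) ζ.im
    rwa [Complex.re_add_im] at hline
  rw [pow_zero, one_mul]
  exact (norm_le_norm_add_norm_sub' _ _).trans (add_le_add (hB _ hζ) hvert)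

end DecaysOnStrips

end StripDecay

section Calculus

lemma integral_eq_zero_of_hasDerivAt_off_countable {E : Type*} [NormedAddCommGroup E]
    [NormedSpace ℝ E] [CompleteSpace E] {f f' : ℝ → E} {s : Set ℝ} (hs : s.Countable)
    (hf : Continuous f) (hf₀ : Tendsto f (cocompact ℝ) (𝓝 0))
    (hf' : ∀ x ∉ s, HasDerivAt f (f' x) x) (hint : Integrable f') : ∫ x, f' x = 0 := by
  have hFTC (r : ℝ) : ∫ x in -r..r, f' x = f r - f (-r) :=
    integral_eq_of_hasDerivAt_off_countable f f' hs hf.continuousOn (fun x hx ↦ hf' x hx.2)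
      hint.intervalIntegrable
  have hlim : Tendsto (fun r ↦ f r - f (-r)) atTop (𝓝 0) := by
    simpa using (hf₀.mono_left atTop_le_cocompact).sub
      ((hf₀.mono_left atBot_le_cocompact).comp tendsto_neg_atTop_atBot)
  exact tendsto_nhds_unique
    ((intervalIntegral_tendsto_integral hint tendsto_neg_atTop_atBot tendsto_id).congr hFTC) hlim

lemma integrable_continuous_smul_of_hasCompactSupport {X 𝕜 E : Type*} [TopologicalSpace X]
    [T2Space X] [MeasurableSpace X] [OpensMeasurableSpace X] {μ : Measure X} [NormedField 𝕜]
    [SecondCountableTopologyEither X 𝕜] [NormedAddCommGroup E] [NormedSpace 𝕜 E] {u : X → 𝕜}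
    {g : X → E} (hu : Continuous u) (hg : Integrable g μ) (hgc : HasCompactSupport g) :
    Integrable (fun x ↦ u x • g x) μ := by
  refine (integrableOn_iff_integrable_of_support_subset ?_).1
    (hg.integrableOn.continuousOn_smul hu.continuousOn hgc)
  exact (Function.support_smul_subset_right u g).trans (subset_tsupport g)

lemma locallyIntegrable_log : LocallyIntegrable Real.log := fun x ↦
  ⟨Icc (x - 1) (x + 1), Icc_mem_nhds (by linarith) (by linarith),
    (intervalIntegrable_iff_integrableOn_Icc_of_le (by linarith)).1
      intervalIntegral.intervalIntegrable_log'⟩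

lemma iteratedDeriv_id_mul_deriv {𝕜 : Type*} [NontriviallyNormedField 𝕜] {F : 𝕜 → 𝕜}
    (hF : ContDiff 𝕜 ∞ F) (l : ℕ) :
    iteratedDeriv l (fun z ↦ z * deriv F z) =
      fun z ↦ z * iteratedDeriv (l + 1) F z + l * iteratedDeriv l F z := by
  induction l with
  | zero => ext z; simp [iteratedDeriv_one]
  | succ l ih =>
    ext z
    have hiter (m : ℕ) : HasDerivAt (iteratedDeriv m F) (iteratedDeriv (m + 1) F z) z := by
      rw [iteratedDeriv_succ]
      exact (hF.differentiable_iteratedDeriv m (mod_cast ENat.natCast_lt_top m) z).hasDerivAt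
    rw [iteratedDeriv_succ, ih,
      (((hasDerivAt_id' z).fun_mul (hiter (l + 1))).fun_add ((hiter l).const_mul (l : 𝕜))).deriv]
    push_cast
    ring

end Calculus

section BilateralLaplace

variable {f g g' : ℝ → ℂ}

/-- The bilateral Laplace transform `ζ ↦ ∫ exp (ζ x) g x dx`, with the sign of the exponent that
makes it the Mellin transform in the logarithmic variable `x = log t`. -/
noncomputable def bilateralLaplace (g : ℝ → ℂ) (ζ : ℂ) : ℂ :=
  ∫ x : ℝ, Complex.exp (ζ * x) * g x

lemma mellin_eq_bilateralLaplace (f : ℝ → ℂ) (ζ : ℂ) :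
    mellin f ζ = bilateralLaplace (fun x ↦ f (Real.exp x)) ζ := by
  have hsubst := integral_image_eq_integral_abs_deriv_smul MeasurableSet.univ
    (fun x _ ↦ (Real.hasDerivAt_exp x).hasDerivWithinAt) Real.exp_injective.injOn
    (fun t : ℝ ↦ (t : ℂ) ^ (ζ - 1) • f t)
  rw [image_univ, Real.range_exp, setIntegral_univ] at hsubst
  rw [mellin, hsubst, bilateralLaplace]
  congr 1 with x
  have hexp : (Real.exp x : ℂ) ≠ 0 := mod_cast (Real.exp_pos x).ne'
  have hpow : (Real.exp x : ℂ) * (Real.exp x : ℂ) ^ (ζ - 1) = Complex.exp (ζ * x) := by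
    rw [Complex.cpow_sub _ _ hexp, Complex.cpow_one, mul_div_cancel₀ _ hexp,
      Complex.cpow_def_of_ne_zero hexp, ← Complex.ofReal_log (Real.exp_pos x).le, Real.log_exp,
      mul_comm]
  rw [abs_of_pos (Real.exp_pos x), Complex.real_smul, smul_eq_mul, ← mul_assoc, hpow]

lemma norm_cexp_mul_ofReal_le {M : ℝ} {ζ : ℂ} (hζ : |ζ.re| ≤ M) (x : ℝ) :
    ‖Complex.exp (ζ * x)‖ ≤ Real.exp (M * |x|) := by
  rw [Complex.norm_exp, Complex.re_mul_ofReal, Real.exp_le_exp]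
  calc ζ.re * x ≤ |ζ.re| * |x| := (le_abs_self _).trans (abs_mul _ _).le
    _ ≤ M * |x| := by gcongr

lemma integrable_cexp_mul (hg : Integrable g) (hgc : HasCompactSupport g) (ζ : ℂ) :
    Integrable (fun x : ℝ ↦ Complex.exp (ζ * x) * g x) :=
  integrable_continuous_smul_of_hasCompactSupport (u := fun x : ℝ ↦ Complex.exp (ζ * x))
    (by fun_prop) hg hgc

lemma integrable_exp_mul_norm (hg : Integrable g) (hgc : HasCompactSupport g) (M : ℝ) :
    Integrable (fun x : ℝ ↦ Real.exp (M * |x|) * ‖g x‖) :=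
  integrable_continuous_smul_of_hasCompactSupport (u := fun x : ℝ ↦ Real.exp (M * |x|))
    (by fun_prop) hg.norm hgc.norm

lemma decaysOnStrips_zero_bilateralLaplace (hg : Integrable g) (hgc : HasCompactSupport g) :
    DecaysOnStrips 0 (bilateralLaplace g) := by
  refine fun M ↦ ⟨∫ x, Real.exp (M * |x|) * ‖g x‖, fun ζ hζ ↦ ?_⟩
  rw [pow_zero, one_mul]
  refine norm_integral_le_of_norm_le (integrable_exp_mul_norm hg hgc M) (.of_forall fun x ↦ ?_)
  rw [norm_mul]
  gcongr
  exact norm_cexp_mul_ofReal_le hζ x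

lemma bilateralLaplace_add (hf : Integrable f) (hfc : HasCompactSupport f) (hg : Integrable g)
    (hgc : HasCompactSupport g) (ζ : ℂ) :
    bilateralLaplace (fun x ↦ f x + g x) ζ = bilateralLaplace f ζ + bilateralLaplace g ζ := by
  simp only [bilateralLaplace, mul_add]
  exact integral_add (integrable_cexp_mul hf hfc ζ) (integrable_cexp_mul hg hgc ζ)

lemma hasDerivAt_bilateralLaplace (hg : Integrable g) (hgc : HasCompactSupport g) (ζ : ℂ) :
    HasDerivAt (bilateralLaplace g) (bilateralLaplace (fun x ↦ x * g x) ζ) ζ := by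
  have hxg : Integrable (fun x : ℝ ↦ (x : ℂ) * g x) :=
    integrable_continuous_smul_of_hasCompactSupport Complex.continuous_ofReal hg hgc
  have hxgc : HasCompactSupport (fun x : ℝ ↦ (x : ℂ) * g x) := hgc.mul_left
  refine (hasDerivAt_integral_of_dominated_loc_of_deriv_le
    (F' := fun z x ↦ Complex.exp (z * x) * (x * g x)) (Metric.ball_mem_nhds ζ one_pos)
    (.of_forall fun z ↦ (integrable_cexp_mul hg hgc z).1) (integrable_cexp_mul hg hgc ζ)
    (integrable_cexp_mul hxg hxgc ζ).1 (.of_forall fun x z hz ↦ ?_)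
    (integrable_exp_mul_norm hxg hxgc (|ζ.re| + 1)) (.of_forall fun x z _ ↦ ?_)).2
  · have hre : |z.re| ≤ |ζ.re| + 1 := by
      have hdist : |z.re - ζ.re| < 1 := (Complex.abs_re_le_norm (z - ζ)).trans_lt
        (mem_ball_iff_norm.1 hz)
      linarith [abs_sub_abs_le_abs_sub z.re ζ.re]
    rw [norm_mul]
    gcongr
    exact norm_cexp_mul_ofReal_le hre x
  · exact (((hasDerivAt_mul_const (x : ℂ)).cexp).mul_const (g x)).congr_deriv (mul_assoc _ _ _)

lemma differentiable_bilateralLaplace (hg : Integrable g) (hgc : HasCompactSupport g) :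
    Differentiable ℂ (bilateralLaplace g) :=
  fun ζ ↦ (hasDerivAt_bilateralLaplace hg hgc ζ).differentiableAt

lemma deriv_bilateralLaplace (hg : Integrable g) (hgc : HasCompactSupport g) :
    deriv (bilateralLaplace g) = bilateralLaplace (fun x ↦ x * g x) :=
  funext fun ζ ↦ (hasDerivAt_bilateralLaplace hg hgc ζ).deriv

lemma mul_bilateralLaplace_eq_neg {s : Set ℝ} (hs : s.Countable) (hg : Continuous g)
    (hgc : HasCompactSupport g) (hg' : Integrable g') (hgc' : HasCompactSupport g')
    (hderiv : ∀ x ∉ s, HasDerivAt g (g' x) x) (ζ : ℂ) :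
    ζ * bilateralLaplace g ζ = -bilateralLaplace g' ζ := by
  have hint := (integrable_cexp_mul (hg.integrable_of_hasCompactSupport hgc) hgc ζ).const_mul ζ
  have hint' := integrable_cexp_mul hg' hgc' ζ
  have hprod : ∀ x ∉ s, HasDerivAt (fun x : ℝ ↦ Complex.exp (ζ * x) * g x)
      (ζ * (Complex.exp (ζ * x) * g x) + Complex.exp (ζ * x) * g' x) x := by
    intro x hx
    have hexp : HasDerivAt (fun x : ℝ ↦ Complex.exp (ζ * x)) (Complex.exp (ζ * x) * ζ) x :=
      (hasDerivAt_const_mul ζ).cexp.comp_ofReal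
    exact (hexp.mul (hderiv x hx)).congr_deriv (by ring)
  have hcont : Continuous (fun x : ℝ ↦ Complex.exp (ζ * x) * g x) := by fun_prop
  have hzero := integral_eq_zero_of_hasDerivAt_off_countable hs hcont
    hgc.mul_left.is_zero_at_infty hprod (hint.add hint')
  rw [integral_add hint hint', integral_const_mul] at hzero
  exact eq_neg_of_add_eq_zero_left hzero

end BilateralLaplace

section TestFunction

variable {φ ψ a : ℝ → ℂ}

/-- Smooth compactly supported functions on the line, as a predicate on plain functions so that
products and derivatives can be written pointwise. -/
structure IsTestFunction (φ : ℝ → ℂ) : Prop where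
  contDiff : ContDiff ℝ ∞ φ
  hasCompactSupport : HasCompactSupport φ

namespace IsTestFunction

lemma continuous (hφ : IsTestFunction φ) : Continuous φ := hφ.contDiff.continuous

lemma integrable (hφ : IsTestFunction φ) : Integrable φ :=
  hφ.continuous.integrable_of_hasCompactSupport hφ.hasCompactSupport

lemma hasDerivAt (hφ : IsTestFunction φ) (x : ℝ) : HasDerivAt φ (deriv φ x) x :=
  (hφ.contDiff.differentiable (by simp) x).hasDerivAt

lemma deriv (hφ : IsTestFunction φ) : IsTestFunction (deriv φ) :=
  ⟨(contDiff_infty_iff_deriv.1 hφ.contDiff).2, hφ.hasCompactSupport.deriv⟩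

lemma add (hφ : IsTestFunction φ) (hψ : IsTestFunction ψ) : IsTestFunction (fun x ↦ φ x + ψ x) :=
  ⟨hφ.contDiff.add hψ.contDiff, hφ.hasCompactSupport.add hψ.hasCompactSupport⟩

lemma contDiff_mul (hφ : IsTestFunction φ) (ha : ContDiff ℝ ∞ a) :
    IsTestFunction (fun x ↦ a x * φ x) :=
  ⟨ha.mul hφ.contDiff, hφ.hasCompactSupport.mul_left⟩

lemma ofReal_mul (hφ : IsTestFunction φ) : IsTestFunction (fun x ↦ (x : ℂ) * φ x) :=
  hφ.contDiff_mul Complex.ofRealCLM.contDiff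

lemma deriv_ofReal_mul (hφ : IsTestFunction φ) (x : ℝ) :
    _root_.deriv (fun x : ℝ ↦ (x : ℂ) * φ x) x = φ x + x * _root_.deriv φ x := by
  have hofReal : HasDerivAt (fun x : ℝ ↦ (x : ℂ)) 1 x := Complex.ofRealCLM.hasDerivAt
  simpa only [one_mul] using (hofReal.fun_mul (hφ.hasDerivAt x)).deriv

lemma comp_exp (hφ : IsTestFunction φ) (hφ₀ : tsupport φ ⊆ Ioi 0) :
    IsTestFunction (fun x ↦ φ (Real.exp x)) where
  contDiff := hφ.contDiff.comp Real.contDiff_exp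
  hasCompactSupport := by
    refine HasCompactSupport.intro (K := Real.log '' tsupport φ) ?_ fun x hx ↦ ?_
    · exact hφ.hasCompactSupport.isCompact.image_of_continuousOn
        (Real.continuousOn_log.mono fun t ht ↦ (hφ₀ ht).ne')
    · exact image_eq_zero_of_notMem_tsupport fun hexp ↦ hx ⟨_, hexp, Real.log_exp x⟩

lemma decaysOnStrips_bilateralLaplace (hφ : IsTestFunction φ) (n : ℕ) :
    DecaysOnStrips n (bilateralLaplace φ) := by
  induction n generalizing φ with
  | zero => exact decaysOnStrips_zero_bilateralLaplace hφ.integrable hφ.hasCompactSupport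
  | succ n ih =>
    refine (ih hφ).succ_of_id_smul ?_
    have hparts (ζ : ℂ) : ζ * bilateralLaplace φ ζ = -bilateralLaplace (_root_.deriv φ) ζ :=
      mul_bilateralLaplace_eq_neg countable_empty hφ.continuous hφ.hasCompactSupport
        hφ.deriv.integrable hφ.deriv.hasCompactSupport (fun x _ ↦ hφ.hasDerivAt x) ζ
    simpa only [smul_eq_mul, hparts, neg_one_mul] using (ih hφ.deriv).const_smul (-1)

end IsTestFunction

end TestFunction

section LogSingular

variable {φ σ : ℝ → ℂ}

/-- The function `log |x| φ x + σ x`: for smooth `φ` and `σ`, a function on the line whose only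
singularity is a logarithmic one at the origin. Mathlib's `Real.log x` is `log |x|`. -/
noncomputable def logSingular (φ σ : ℝ → ℂ) (x : ℝ) : ℂ := Real.log x * φ x + σ x

lemma ofReal_mul_logSingular (φ σ : ℝ → ℂ) (x : ℝ) :
    x * logSingular φ σ x = logSingular (fun x ↦ x * φ x) (fun x ↦ x * σ x) x := by
  simp only [logSingular]
  ring

lemma hasCompactSupport_logSingular (hφ : HasCompactSupport φ) (hσ : HasCompactSupport σ) :
    HasCompactSupport (logSingular φ σ) :=
  HasCompactSupport.add hφ.mul_left hσ

lemma integrable_logSingular (hφ : IsTestFunction φ) (hσ : IsTestFunction σ) :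
    Integrable (logSingular φ σ) :=
  (locallyIntegrable_log.integrable_smul_right_of_hasCompactSupport hφ.continuous
    hφ.hasCompactSupport).add hσ.integrable

lemma continuous_ofReal_mul_logSingular (hφ : Continuous φ) (hσ : Continuous σ) :
    Continuous (fun x : ℝ ↦ x * logSingular φ σ x) := by
  have hcont : Continuous (fun x : ℝ ↦ ((x * Real.log x : ℝ) : ℂ) * φ x + x * σ x) :=
    ((Complex.continuous_ofReal.comp Real.continuous_mul_log).mul hφ).add
      (Complex.continuous_ofReal.mul hσ)
  convert hcont using 2 with x
  push_cast [logSingular]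
  ring

lemma hasDerivAt_ofReal_mul_logSingular (hφ : IsTestFunction φ) (hσ : IsTestFunction σ) {x : ℝ}
    (hx : x ≠ 0) :
    HasDerivAt (fun x : ℝ ↦ x * logSingular φ σ x)
      (logSingular (deriv fun x ↦ x * φ x) (fun x ↦ φ x + deriv (fun x ↦ x * σ x) x) x) x := by
  have hlog := (Real.hasDerivAt_log hx).ofReal_comp
  have hsum := (hlog.mul (hφ.ofReal_mul.hasDerivAt x)).add (hσ.ofReal_mul.hasDerivAt x)
  refine (hsum.congr_deriv ?_).congr_of_eventuallyEq
    (.of_forall fun y ↦ ofReal_mul_logSingular φ σ y)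
  have hx' : (x : ℂ) ≠ 0 := mod_cast hx
  simp only [logSingular]
  push_cast
  field_simp
  ring

lemma differentiable_bilateralLaplace_logSingular (hφ : IsTestFunction φ)
    (hσ : IsTestFunction σ) : Differentiable ℂ (bilateralLaplace (logSingular φ σ)) :=
  differentiable_bilateralLaplace (integrable_logSingular hφ hσ)
    (hasCompactSupport_logSingular hφ.hasCompactSupport hσ.hasCompactSupport)

lemma deriv_bilateralLaplace_logSingular (hφ : IsTestFunction φ) (hσ : IsTestFunction σ) :
    deriv (bilateralLaplace (logSingular φ σ)) =
      bilateralLaplace (logSingular (fun x ↦ x * φ x) fun x ↦ x * σ x) := by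
  rw [deriv_bilateralLaplace (integrable_logSingular hφ hσ)
    (hasCompactSupport_logSingular hφ.hasCompactSupport hσ.hasCompactSupport)]
  simp only [ofReal_mul_logSingular]

lemma mul_deriv_bilateralLaplace_logSingular (hφ : IsTestFunction φ) (hσ : IsTestFunction σ)
    (ζ : ℂ) :
    ζ * deriv (bilateralLaplace (logSingular φ σ)) ζ =
      -bilateralLaplace (logSingular (deriv fun x ↦ x * φ x)
        fun x ↦ φ x + deriv (fun x ↦ x * σ x) x) ζ := by
  have hσ' := hφ.add hσ.ofReal_mul.deriv
  have hcs := hasCompactSupport_logSingular hφ.hasCompactSupport hσ.hasCompactSupport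
  rw [deriv_bilateralLaplace (integrable_logSingular hφ hσ) hcs]
  exact mul_bilateralLaplace_eq_neg (countable_singleton 0)
    (continuous_ofReal_mul_logSingular hφ.continuous hσ.continuous) hcs.mul_left
    (integrable_logSingular hφ.ofReal_mul.deriv hσ')
    (hasCompactSupport_logSingular hφ.ofReal_mul.deriv.hasCompactSupport hσ'.hasCompactSupport)
    (fun x hx ↦ hasDerivAt_ofReal_mul_logSingular hφ hσ hx) ζ

lemma bilateralLaplace_logSingular_deriv_ofReal_mul (hφ : IsTestFunction φ)
    (hσ : IsTestFunction σ) (ζ : ℂ) :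
    bilateralLaplace (logSingular (deriv fun x ↦ x * φ x)
        fun x ↦ φ x + deriv (fun x ↦ x * σ x) x) ζ =
      bilateralLaplace (logSingular φ σ) ζ +
        deriv (bilateralLaplace (logSingular (deriv φ) (deriv σ))) ζ + bilateralLaplace φ ζ := by
  have hφ' := hφ.deriv.ofReal_mul
  have hσ' := hσ.deriv.ofReal_mul
  have hcs := hasCompactSupport_logSingular hφ.hasCompactSupport hσ.hasCompactSupport
  have hcs' := hasCompactSupport_logSingular hφ'.hasCompactSupport hσ'.hasCompactSupport
  have hint := integrable_logSingular hφ hσ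
  have hint' := integrable_logSingular hφ' hσ'
  rw [deriv_bilateralLaplace_logSingular hφ.deriv hσ.deriv,
    ← bilateralLaplace_add hint hcs hint' hcs']
  refine .trans ?_ (bilateralLaplace_add (hint.add hint') (hcs.add hcs') hφ.integrable
    hφ.hasCompactSupport ζ)
  congr 1 with x
  simp only [logSingular, Pi.add_apply, hφ.deriv_ofReal_mul, hσ.deriv_ofReal_mul]
  ring

lemma decaysOnStrips_one_bilateralLaplace_logSingular (hφ : IsTestFunction φ)
    (hσ : IsTestFunction σ) : DecaysOnStrips 1 (bilateralLaplace (logSingular φ σ)) := by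
  set L := bilateralLaplace (logSingular φ σ)
  set L' := bilateralLaplace (logSingular (deriv φ) (deriv σ))
  have hL : Differentiable ℂ L := differentiable_bilateralLaplace_logSingular hφ hσ
  have hL' : Differentiable ℂ L' := differentiable_bilateralLaplace_logSingular hφ.deriv hσ.deriv
  have hderiv : deriv (fun ζ ↦ ζ * L ζ + L' ζ) = fun ζ ↦ (-1 : ℂ) • bilateralLaplace φ ζ := by
    ext ζ
    rw [(((hasDerivAt_id' ζ).fun_mul (hL ζ).hasDerivAt).fun_add (hL' ζ).hasDerivAt).deriv,
      mul_deriv_bilateralLaplace_logSingular hφ hσ,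
      bilateralLaplace_logSingular_deriv_ofReal_mul hφ hσ, smul_eq_mul]
    ring
  have hbounded : DecaysOnStrips 0 (fun ζ ↦ ζ * L ζ + L' ζ) :=
    .zero_of_deriv ((differentiable_id.mul hL).add hL')
      (hderiv ▸ (hφ.decaysOnStrips_bilateralLaplace 2).const_smul (-1))
  have hbounded₀ {φ σ : ℝ → ℂ} (hφ : IsTestFunction φ) (hσ : IsTestFunction σ) :
      DecaysOnStrips 0 (bilateralLaplace (logSingular φ σ)) :=
    decaysOnStrips_zero_bilateralLaplace (integrable_logSingular hφ hσ)
      (hasCompactSupport_logSingular hφ.hasCompactSupport hσ.hasCompactSupport)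
  refine (hbounded₀ hφ hσ).succ_of_id_smul ?_
  have hdiff : DecaysOnStrips 0 (fun ζ ↦ ζ * L ζ + L' ζ - L' ζ) :=
    hbounded.sub (hbounded₀ hφ.deriv hσ.deriv)
  simpa only [smul_eq_mul, add_sub_cancel_right] using hdiff

theorem decaysOnStrips_iteratedDeriv_bilateralLaplace_logSingular (hφ : IsTestFunction φ)
    (hσ : IsTestFunction σ) (l : ℕ) :
    DecaysOnStrips (l + 1) (iteratedDeriv l (bilateralLaplace (logSingular φ σ))) := by
  induction l generalizing φ σ with
  | zero => simpa using decaysOnStrips_one_bilateralLaplace_logSingular hφ hσ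
  | succ l ih =>
    have hdecay : DecaysOnStrips (l + 1)
        (iteratedDeriv (l + 1) (bilateralLaplace (logSingular φ σ))) := by
      rw [iteratedDeriv_succ', deriv_bilateralLaplace_logSingular hφ hσ]
      exact ih hφ.ofReal_mul hσ.ofReal_mul
    refine hdecay.succ_of_id_smul ?_
    have hEuler := congrArg (iteratedDeriv l)
      (funext (mul_deriv_bilateralLaplace_logSingular hφ hσ))
    rw [iteratedDeriv_id_mul_deriv
      (differentiable_bilateralLaplace_logSingular hφ hσ).contDiff] at hEuler
    convert ((ih hφ hσ).const_smul (-l)).sub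
      (ih hφ.ofReal_mul.deriv (hφ.add hσ.ofReal_mul.deriv)) using 2 with ζ
    have hζ := congrFun hEuler ζ
    rw [iteratedDeriv_fun_neg] at hζ
    simp only [smul_eq_mul]
    linear_combination hζ

end LogSingular

section LogCothKernel

lemma analyticAt_dslope {𝕜 E : Type*} [NontriviallyNormedField 𝕜] [NormedAddCommGroup E]
    [NormedSpace 𝕜 E] {f : 𝕜 → E} {a b : 𝕜} (ha : AnalyticAt 𝕜 f a) (hb : AnalyticAt 𝕜 f b) :
    AnalyticAt 𝕜 (dslope f a) b := by
  rcases eq_or_ne b a with rfl | hba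
  · obtain ⟨p, hp⟩ := ha
    exact ⟨_, hp.has_fpower_series_dslope_fslope⟩
  · refine AnalyticAt.congr ?_ (dslope_eventuallyEq_slope_of_ne f hba).symm
    exact ((analyticAt_id.sub analyticAt_const).inv (sub_ne_zero.2 hba)).smul
      (hb.sub analyticAt_const)

lemma dslope_pos_of_strictMono {f : ℝ → ℝ} (hf : StrictMono f) {a : ℝ} (ha : 0 < deriv f a)
    (b : ℝ) : 0 < dslope f a b := by
  rcases eq_or_ne b a with rfl | hba
  · rwa [dslope_same]
  · rw [dslope_of_ne f hba]
    exact (hf.strictMonoOn univ).slope_pos (mem_univ a) (mem_univ b) hba.symm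

lemma dslope_exp_zero_pos (x : ℝ) : 0 < dslope Real.exp 0 x :=
  dslope_pos_of_strictMono Real.exp_strictMono (by simp) x

/-- The smooth part of `log |(1 + exp x) / (1 - exp x)|` after removing its singularity
`-log |x|` at the origin; `dslope Real.exp 0 x` is the smooth function `(exp x - 1) / x`. -/
noncomputable def logKernelRegularPart (x : ℝ) : ℝ :=
  Real.log (1 + Real.exp x) - Real.log (dslope Real.exp 0 x)

lemma contDiff_logKernelRegularPart : ContDiff ℝ ∞ logKernelRegularPart := by
  have hdslope : ContDiff ℝ ∞ (dslope Real.exp 0) := contDiff_iff_contDiffAt.2 fun x ↦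
    (analyticAt_dslope analyticAt_rexp analyticAt_rexp).contDiffAt
  exact ((contDiff_const.add Real.contDiff_exp).log fun x ↦ by positivity).sub
    (hdslope.log fun x ↦ (dslope_exp_zero_pos x).ne')

lemma log_abs_one_add_exp_div_one_sub_exp {x : ℝ} (hx : x ≠ 0) :
    Real.log |(1 + Real.exp x) / (1 - Real.exp x)| = logKernelRegularPart x - Real.log x := by
  have hslope : 1 - Real.exp x = -(x * dslope Real.exp 0 x) := by
    have := sub_smul_dslope Real.exp 0 x
    simp only [sub_zero, smul_eq_mul, Real.exp_zero] at this
    linarith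
  have hne : dslope Real.exp 0 x ≠ 0 := (dslope_exp_zero_pos x).ne'
  rw [Real.log_abs, hslope, Real.log_div (by positivity) (neg_ne_zero.2 (mul_ne_zero hx hne)),
    Real.log_neg_eq_log, Real.log_mul hx hne, logKernelRegularPart]
  ring

lemma mellin_log_kernel_mul_eq_bilateralLaplace (τ : ℝ → ℂ) (ζ : ℂ) :
    mellin (fun t ↦ (Real.log |(1 + t) / (1 - t)| : ℂ) * τ t) ζ =
      bilateralLaplace (logSingular (fun x ↦ -1 * τ (Real.exp x))
        fun x ↦ logKernelRegularPart x * τ (Real.exp x)) ζ := by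
  rw [mellin_eq_bilateralLaplace]
  refine integral_congr_ae ?_
  filter_upwards [Measure.ae_ne volume 0] with x hx
  rw [log_abs_one_add_exp_div_one_sub_exp hx, logSingular]
  push_cast
  ring

end LogCothKernel

end

/-- Let `w(t) = log|(1+t)/(1−t)|` and let `τ` be a smooth function with compact support
contained in `(0,∞)`. Then the Mellin transform `ℳ(wτ)(ζ) = ∫₀^∞ t^{ζ−1} w(t) τ(t) dt`
extends to an entire function `F` of `ζ`, and for all real `c < d` and every integer
`l ≥ 0` one has `sup { (1+|Im ζ|)^{l+1} |F^{(l)}(ζ)| : c ≤ Re ζ ≤ d } < ∞`. -/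
theorem mellin_log_cutoff_decay (τ : ℝ → ℂ) (hτ : ContDiff ℝ (⊤ : ℕ∞) τ)
    (hτc : HasCompactSupport τ) (hτs : tsupport τ ⊆ Set.Ioi 0) :
    ∃ F : ℂ → ℂ, Differentiable ℂ F ∧
      (∀ ζ : ℂ, F ζ =
        ∫ t in Set.Ioi (0:ℝ), (t : ℂ) ^ (ζ - 1) * (Real.log |(1 + t) / (1 - t)| : ℂ) * τ t) ∧
      ∀ (c d : ℝ), c < d → ∀ l : ℕ, ∃ C : ℝ,
        ∀ ζ : ℂ, c ≤ ζ.re → ζ.re ≤ d →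
          (1 + |ζ.im|) ^ (l + 1) * ‖iteratedDeriv l F ζ‖ ≤ C := by
  have hψ : IsTestFunction (fun x ↦ τ (Real.exp x)) := IsTestFunction.comp_exp ⟨hτ, hτc⟩ hτs
  have hφ := hψ.contDiff_mul (a := fun _ ↦ -1) contDiff_const
  have hσ : IsTestFunction (fun x ↦ logKernelRegularPart x * τ (Real.exp x)) :=
    hψ.contDiff_mul (Complex.ofRealCLM.contDiff.comp contDiff_logKernelRegularPart)
  refine ⟨_, differentiable_bilateralLaplace_logSingular hφ hσ, fun ζ ↦ ?_, fun c d _ l ↦ ?_⟩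
  · simpa only [mellin, smul_eq_mul, ← mul_assoc] using
      (mellin_log_kernel_mul_eq_bilateralLaplace τ ζ).symm
  · obtain ⟨C, hC⟩ :=
      decaysOnStrips_iteratedDeriv_bilateralLaplace_logSingular hφ hσ l (max |c| |d|)
    exact ⟨C, fun ζ hc hd ↦ hC ζ (abs_le_max_abs_abs hc hd)⟩
end

section
/- For all t, t' > 0 and all θ, θ' ∈ ℝ one has ⟨r(t,θ) − r(t',θ'), ν(t,θ)⟩ = cos α · sin α · t' · (1 − cos(θ' − θ)). Consequently, whenever r(t,θ) ≠ r(t',θ'), the kernel satisfies the symmetry relation t · K^{Γ_α}(t,θ,t',θ') = t' · K^{Γ_α}(t',θ',t,θ). -/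
open Real

/-- Parametrization of the infinite straight cone of opening angle `2α`. -/
noncomputable def coneParam (α t θ : ℝ) : EuclideanSpace ℝ (Fin 3) :=
  !₂[sin α * t * cos θ, sin α * t * sin θ, cos α * t]

/-- Outward unit normal of the cone. -/
noncomputable def coneNormal (α θ : ℝ) : EuclideanSpace ℝ (Fin 3) :=
  !₂[cos α * cos θ, cos α * sin θ, -sin α]

/-- The layer-potential kernel of the infinite straight cone. -/
noncomputable def coneKernel (α t θ t' θ' : ℝ) : ℝ :=
  (inner ℝ (coneParam α t θ - coneParam α t' θ') (coneNormal α θ) : ℝ) /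
    ‖coneParam α t' θ' - coneParam α t θ‖ ^ 3

/-! The ruling through `r(t,θ)` is tangent to the cone, so only `r(t',θ')` contributes to
`⟨r(t,θ) − r(t',θ'), ν(t,θ)⟩`. Its contribution is `t'` times a function symmetric in `θ, θ'`; hence
multiplying by `t` makes the numerator of the kernel symmetric, as its denominator already is. -/

theorem inner_coneParam_coneNormal (α t θ φ : ℝ) :
    inner ℝ (coneParam α t φ) (coneNormal α θ) = -(cos α * sin α * t * (1 - cos (φ - θ))) := by
  simp only [coneParam, coneNormal, PiLp.inner_apply, Fin.sum_univ_three, RCLike.inner_apply,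
    conj_trivial, Matrix.cons_val, cos_sub]
  ring

theorem inner_coneParam_coneNormal_self (α t θ : ℝ) :
    inner ℝ (coneParam α t θ) (coneNormal α θ) = 0 := by
  simp [inner_coneParam_coneNormal]

theorem inner_coneParam_sub_coneParam_coneNormal (α t t' θ θ' : ℝ) :
    inner ℝ (coneParam α t θ - coneParam α t' θ') (coneNormal α θ)
      = cos α * sin α * t' * (1 - cos (θ' - θ)) := by
  rw [inner_sub_left, inner_coneParam_coneNormal_self, inner_coneParam_coneNormal, zero_sub,
    neg_neg]

theorem mul_inner_coneParam_sub_coneParam_coneNormal_comm (α t t' θ θ' : ℝ) :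
    t * inner ℝ (coneParam α t θ - coneParam α t' θ') (coneNormal α θ)
      = t' * inner ℝ (coneParam α t' θ' - coneParam α t θ) (coneNormal α θ') := by
  have cos_sub_comm : cos (θ' - θ) = cos (θ - θ') := by rw [← cos_neg, neg_sub]
  rw [inner_coneParam_sub_coneParam_coneNormal, inner_coneParam_sub_coneParam_coneNormal,
    cos_sub_comm]
  ring

theorem mul_coneKernel_comm (α t t' θ θ' : ℝ) :
    t * coneKernel α t θ t' θ' = t' * coneKernel α t' θ' t θ := by
  rw [coneKernel, coneKernel, ← mul_div_assoc, ← mul_div_assoc,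
    mul_inner_coneParam_sub_coneParam_coneNormal_comm, norm_sub_rev]

theorem cone_kernel_symmetry_general (α t t' θ θ' : ℝ) :
    inner ℝ (coneParam α t θ - coneParam α t' θ') (coneNormal α θ)
        = cos α * sin α * t' * (1 - cos (θ' - θ)) ∧
    (coneParam α t θ ≠ coneParam α t' θ' →
      t * coneKernel α t θ t' θ' = t' * coneKernel α t' θ' t θ) :=
  ⟨inner_coneParam_sub_coneParam_coneNormal α t t' θ θ', fun _ => mul_coneKernel_comm α t t' θ θ'⟩

/-- For the infinite straight cone: `⟨r(t,θ) − r(t',θ'), ν(t,θ)⟩ =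
cos α · sin α · t' · (1 − cos(θ' − θ))`, and consequently, whenever
`r(t,θ) ≠ r(t',θ')`, the kernel satisfies the symmetry
`t · K^{Γ_α}(t,θ,t',θ') = t' · K^{Γ_α}(t',θ',t,θ)`. -/
theorem cone_kernel_symmetry (α : ℝ) (hα0 : 0 < α) (hαπ : α < π) (hα2 : α ≠ π / 2)
    (t t' θ θ' : ℝ) (ht : 0 < t) (ht' : 0 < t') :
    (inner ℝ (coneParam α t θ - coneParam α t' θ') (coneNormal α θ) : ℝ)
        = cos α * sin α * t' * (1 - cos (θ' - θ)) ∧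
    (coneParam α t θ ≠ coneParam α t' θ' →
      t * coneKernel α t θ t' θ' = t' * coneKernel α t' θ' t θ) := by
  exact cone_kernel_symmetry_general α t t' θ θ'
end

section
/- There is a constant C > 0, depending only on α, such that for all t ≥ 3/2 one has |K_0^α(t,1)| ≤ C · t^{−3}, and for every integer n ≠ 0 and all t ≥ 3/2 one has |K_n^α(t,1)| ≤ C · t^{−(|n|+2)}. -/
open Real

/-- The `n`-th modal kernel `K_n^α(t,t') = (1/(2π)) ∫₀^{2π} e^{−inθ} K^{Γ_α}(t,θ,t',0) dθ`. -/
noncomputable def modalKernel (α : ℝ) (n : ℤ) (t t' : ℝ) : ℂ :=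
  ((1 / (2 * π) : ℝ) : ℂ) *
    ∫ θ in (0:ℝ)..(2 * π), Complex.exp (-Complex.I * (n : ℂ) * (θ : ℂ)) * (coneKernel α t θ t' 0 : ℂ)

/-!
The kernel `K^{Γ_α}(t,θ,t',0)` extends holomorphically in `θ` to the closed strip
`|Im θ| ≤ |log (t/t')|`, because there the squared distance keeps real part at least
`cos² α (t - t')²`, so that its principal square root never meets the branch cut. The `n`-th Fourier
coefficient can therefore be computed on the line `Im θ = Y` for every `Y` in the strip, where
`e^{-inθ}` has modulus `e^{nY}`. The choice `Y = 0` gives the bound for `n = 0`. For the other modes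
`Y = ∓ log (t/t')` gains the factor `(t'/t)^|n|` at the cost of a numerator `1 - cos θ` of size
`t/t'`. When `cos α = 0` the cone is a plane and the kernel vanishes.
-/

section Fourier

open Complex

theorem integral_eq_integral_add_mul_I_of_periodic {E : Type*} [NormedAddCommGroup E]
    [NormedSpace ℂ E] {f : ℂ → E} {T Y : ℝ} (hper : Function.Periodic f T)
    (hf : DifferentiableOn ℂ f {z | z.im ∈ Set.uIcc 0 Y}) :
    ∫ x in (0 : ℝ)..T, f x = ∫ x in (0 : ℝ)..T, f (x + Y * I) := by
  have boundary := integral_boundary_rect_eq_zero_of_differentiableOn f 0 (T + Y * I)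
    (hf.mono fun z hz => by simpa using hz.2)
  have sides_cancel : ∀ y : ℝ, f (T + y * I) = f (y * I) := fun y => by rw [add_comm, hper]
  simpa [sides_cancel, sub_eq_zero] using boundary

theorem periodic_exp_neg_I_mul_int (n : ℤ) :
    Function.Periodic (fun z : ℂ => exp (-I * n * z)) (2 * π : ℝ) := fun z =>
  exp_eq_exp_iff_exists_int.mpr ⟨-n, by push_cast; ring⟩

theorem norm_exp_neg_I_mul_int_mul (n : ℤ) (z : ℂ) :
    ‖exp (-I * n * z)‖ = Real.exp (n * z.im) := by
  simp [norm_exp]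

theorem norm_integral_exp_mul_le_of_periodic {f : ℂ → ℂ} {Y M : ℝ} (n : ℤ)
    (hper : Function.Periodic f (2 * π : ℝ))
    (hf : DifferentiableOn ℂ f {z | z.im ∈ Set.uIcc 0 Y})
    (hM : ∀ z : ℂ, z.im = Y → ‖f z‖ ≤ M) :
    ‖∫ x in (0 : ℝ)..(2 * π), exp (-I * n * x) * f x‖ ≤ 2 * π * (Real.exp (n * Y) * M) := by
  have shift := integral_eq_integral_add_mul_I_of_periodic
    ((periodic_exp_neg_I_mul_int n).mul hper)
    (DifferentiableOn.mul (by fun_prop) hf)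
  have bound : ∀ x : ℝ, ‖exp (-I * n * (x + Y * I)) * f (x + Y * I)‖ ≤ Real.exp (n * Y) * M := by
    intro x
    have im_eq : ((x : ℂ) + Y * I).im = Y := by simp
    rw [norm_mul, norm_exp_neg_I_mul_int_mul, im_eq]
    gcongr
    exact hM _ im_eq
  calc ‖∫ x in (0 : ℝ)..(2 * π), exp (-I * n * x) * f x‖
      = ‖∫ x in (0 : ℝ)..(2 * π), exp (-I * n * (x + Y * I)) * f (x + Y * I)‖ := congrArg _ shift
    _ ≤ Real.exp (n * Y) * M * |2 * π - 0| :=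
        intervalIntegral.norm_integral_le_of_norm_le_const fun x _ => bound x
    _ = 2 * π * (Real.exp (n * Y) * M) := by rw [sub_zero, abs_of_pos two_pi_pos, mul_comm]

theorem re_cos_eq (z : ℂ) : (cos z).re = Real.cos z.re * Real.cosh z.im := by
  conv_lhs => rw [cos_eq]
  simp [← ofReal_cos, ← ofReal_cosh, ← ofReal_sin, ← ofReal_sinh]

theorem norm_cos_le_cosh_im (z : ℂ) : ‖cos z‖ ≤ Real.cosh z.im := by
  calc ‖cos z‖ = ‖exp (z * I) + exp (-z * I)‖ / 2 := by
        rw [Complex.cos, norm_div, Complex.norm_ofNat]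
    _ ≤ (‖exp (z * I)‖ + ‖exp (-z * I)‖) / 2 := by gcongr; exact norm_add_le _ _
    _ = Real.cosh z.im := by simp [norm_exp, Real.cosh_eq, add_comm]

end Fourier

theorem two_mul_mul_cosh_log_div {s t : ℝ} (hs : 0 < s) (ht : 0 < t) :
    2 * s * t * cosh (log (s / t)) = s ^ 2 + t ^ 2 := by
  rw [cosh_log (div_pos hs ht)]
  field_simp

section ConeKernel

/-- The squared distance between the points of parameters `(t, z)` and `(t', 0)` on the cone,
extended to complex angles `z`. -/
noncomputable def coneDistSq (α t t' : ℝ) (z : ℂ) : ℂ :=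
  t ^ 2 + t' ^ 2 - 2 * t * t' * (sin α ^ 2 * Complex.cos z + cos α ^ 2)

/-- The extension of `coneKernel α t z t' 0` to complex angles `z`. The square root is the principal
branch, so this is holomorphic only where `coneDistSq α t t'` avoids the negative real axis. -/
noncomputable def complexConeKernel (α t t' : ℝ) (z : ℂ) : ℂ :=
  t' * (sin α * cos α) * (1 - Complex.cos z) / (coneDistSq α t t' z ^ (1 / 2 : ℂ)) ^ 3

theorem inner_coneParam_sub_coneNormal (α t θ t' θ' : ℝ) :
    inner ℝ (coneParam α t θ - coneParam α t' θ') (coneNormal α θ) =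
      t' * (sin α * cos α) * (1 - cos (θ - θ')) := by
  simp only [PiLp.inner_apply, Fin.sum_univ_three, coneParam, coneNormal, cos_sub, PiLp.sub_apply,
    RCLike.inner_apply, ringHom_apply, Matrix.cons_val]
  linear_combination (sin α * cos α * t) * sin_sq_add_cos_sq θ

theorem norm_coneParam_sub_sq (α t θ t' θ' : ℝ) :
    ‖coneParam α t' θ' - coneParam α t θ‖ ^ 2 =
      t ^ 2 + t' ^ 2 - 2 * t * t' * (sin α ^ 2 * cos (θ - θ') + cos α ^ 2) := by
  simp only [EuclideanSpace.norm_sq_eq, Fin.sum_univ_three, coneParam, cos_sub, norm_eq_abs, sq_abs,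
    PiLp.sub_apply, Matrix.cons_val]
  linear_combination (sin α ^ 2 * t ^ 2) * sin_sq_add_cos_sq θ +
    (sin α ^ 2 * t' ^ 2) * sin_sq_add_cos_sq θ' + (t ^ 2 + t' ^ 2) * sin_sq_add_cos_sq α

theorem complexConeKernel_ofReal (α t t' θ : ℝ) :
    complexConeKernel α t t' θ = coneKernel α t θ t' 0 := by
  have dist_sq : coneDistSq α t t' θ = ((‖coneParam α t' 0 - coneParam α t θ‖ ^ 2 : ℝ) : ℂ) := by
    rw [norm_coneParam_sub_sq, coneDistSq, sub_zero]
    push_cast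
    rfl
  have sqrt_dist_sq : coneDistSq α t t' θ ^ (1 / 2 : ℂ) = ‖coneParam α t' 0 - coneParam α t θ‖ := by
    rw [dist_sq, Complex.ofReal_pow, one_div]
    exact Complex.pow_cpow_nat_inv two_ne_zero
      (by simp [Complex.arg_ofReal_of_nonneg, pi_pos])
      (by simp [Complex.arg_ofReal_of_nonneg, pi_div_two_pos.le])
  rw [complexConeKernel, sqrt_dist_sq, coneKernel, inner_coneParam_sub_coneNormal, sub_zero]
  push_cast
  rfl

theorem modalKernel_eq_zero_of_cos_eq_zero {α : ℝ} (hα : cos α = 0) (n : ℤ) (t t' : ℝ) :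
    modalKernel α n t t' = 0 := by
  simp [modalKernel, coneKernel, inner_coneParam_sub_coneNormal, hα]

theorem complexConeKernel_periodic (α t t' : ℝ) :
    Function.Periodic (complexConeKernel α t t') (2 * π : ℝ) := fun z => by
  simp only [complexConeKernel, coneDistSq, Complex.ofReal_mul, Complex.ofReal_ofNat,
    Complex.cos_add_two_pi]

theorem re_coneDistSq (α t t' : ℝ) (z : ℂ) :
    (coneDistSq α t t' z).re = cos α ^ 2 * (t - t') ^ 2 +
      sin α ^ 2 * (t ^ 2 + t' ^ 2 - 2 * t * t' * (cos z.re * cosh z.im)) := by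
  have affine_in_cos : coneDistSq α t t' z = ((t ^ 2 + t' ^ 2 - 2 * t * t' * cos α ^ 2 : ℝ) : ℂ) -
      ((2 * t * t' * sin α ^ 2 : ℝ) : ℂ) * Complex.cos z := by
    rw [coneDistSq]
    push_cast
    ring
  rw [affine_in_cos, Complex.sub_re, Complex.re_ofReal_mul, Complex.ofReal_re, re_cos_eq]
  linear_combination -(t ^ 2 + t' ^ 2) * sin_sq_add_cos_sq α

variable {α t t' : ℝ}

theorem le_re_coneDistSq (htt' : 0 ≤ t * t') {z : ℂ}
    (hz : 2 * t * t' * cosh z.im ≤ t ^ 2 + t' ^ 2) :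
    cos α ^ 2 * (t - t') ^ 2 ≤ (coneDistSq α t t' z).re := by
  have cos_mul_cosh_le : cos z.re * cosh z.im ≤ cosh z.im :=
    mul_le_of_le_one_left (cosh_pos _).le (cos_le_one _)
  rw [re_coneDistSq, le_add_iff_nonneg_right]
  refine mul_nonneg (sq_nonneg _) (sub_nonneg.mpr (hz.trans' ?_))
  nlinarith

theorem le_norm_sqrt_coneDistSq (htt' : 0 ≤ t * t') {z : ℂ}
    (hz : 2 * t * t' * cosh z.im ≤ t ^ 2 + t' ^ 2) :
    |cos α| * |t - t'| ≤ ‖coneDistSq α t t' z ^ (1 / 2 : ℂ)‖ := by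
  have norm_sqrt : ‖coneDistSq α t t' z ^ (1 / 2 : ℂ)‖ = √‖coneDistSq α t t' z‖ := by
    rw [sqrt_eq_rpow, ← Complex.norm_cpow_real]
    norm_num
  rw [norm_sqrt]
  apply le_sqrt_of_sq_le
  rw [mul_pow, sq_abs, sq_abs]
  exact (le_re_coneDistSq htt' hz).trans (Complex.re_le_norm _)

theorem differentiableAt_complexConeKernel (hα : cos α ≠ 0) (htt' : 0 ≤ t * t') (hne : t ≠ t')
    {z : ℂ} (hz : 2 * t * t' * cosh z.im ≤ t ^ 2 + t' ^ 2) :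
    DifferentiableAt ℂ (complexConeKernel α t t') z := by
  have lower_bound_pos : 0 < cos α ^ 2 * (t - t') ^ 2 :=
    mul_pos (sq_pos_of_ne_zero hα) (sq_pos_of_ne_zero (sub_ne_zero.mpr hne))
  have mem_slitPlane : coneDistSq α t t' z ∈ Complex.slitPlane :=
    Or.inl (lower_bound_pos.trans_le (le_re_coneDistSq htt' hz))
  have dist_diff : DifferentiableAt ℂ (coneDistSq α t t') z := by
    unfold coneDistSq
    fun_prop
  have sqrt_ne_zero : coneDistSq α t t' z ^ (1 / 2 : ℂ) ≠ 0 :=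
    Complex.cpow_ne_zero_iff.mpr (Or.inl (Complex.slitPlane_ne_zero mem_slitPlane))
  exact DifferentiableAt.div (by fun_prop)
    ((dist_diff.cpow (by fun_prop) mem_slitPlane).pow 3) (pow_ne_zero 3 sqrt_ne_zero)

theorem norm_complexConeKernel_le (hα : cos α ≠ 0) (htt' : 0 ≤ t * t') (hne : t ≠ t')
    {z : ℂ} (hz : 2 * t * t' * cosh z.im ≤ t ^ 2 + t' ^ 2) :
    ‖complexConeKernel α t t' z‖ ≤ |t'| * (1 + cosh z.im) / (cos α ^ 2 * |t - t'| ^ 3) := by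
  have : t - t' ≠ 0 := sub_ne_zero.mpr hne
  have norm_one_sub_cos : ‖1 - Complex.cos z‖ ≤ 1 + cosh z.im :=
    (norm_sub_le _ _).trans (by simpa using norm_cos_le_cosh_im z)
  calc ‖complexConeKernel α t t' z‖
      = |t'| * (|sin α| * |cos α|) * ‖1 - Complex.cos z‖ /
          ‖coneDistSq α t t' z ^ (1 / 2 : ℂ)‖ ^ 3 := by
        simp only [complexConeKernel, norm_div, norm_mul, norm_pow, Complex.norm_real, norm_eq_abs]
    _ ≤ |t'| * (1 * |cos α|) * (1 + cosh z.im) / (|cos α| * |t - t'|) ^ 3 := by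
        gcongr
        · exact abs_sin_le_one α
        · exact le_norm_sqrt_coneDistSq htt' hz
    _ = |t'| * (1 + cosh z.im) / (cos α ^ 2 * |t - t'| ^ 3) := by
        rw [← sq_abs (cos α)]
        field_simp

end ConeKernel

section ModalKernel

variable {α t t' : ℝ}

theorem norm_modalKernel_le_exp_mul (hα : cos α ≠ 0) (htt' : 0 ≤ t * t') (hne : t ≠ t')
    (n : ℤ) {Y : ℝ} (hY : 2 * t * t' * cosh Y ≤ t ^ 2 + t' ^ 2) :
    ‖modalKernel α n t t'‖ ≤
      exp (n * Y) * (|t'| * (1 + cosh Y) / (cos α ^ 2 * |t - t'| ^ 3)) := by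
  have strip : ∀ z : ℂ, z.im ∈ Set.uIcc 0 Y → 2 * t * t' * cosh z.im ≤ t ^ 2 + t' ^ 2 := by
    intro z hz
    have cosh_le : cosh z.im ≤ cosh Y :=
      cosh_le_cosh.mpr (by simpa using Set.abs_sub_left_of_mem_uIcc hz)
    nlinarith
  have integral_le := norm_integral_exp_mul_le_of_periodic n (complexConeKernel_periodic α t t')
    (fun z hz =>
      (differentiableAt_complexConeKernel hα htt' hne (strip z hz)).differentiableWithinAt)
    (fun z hz => hz ▸ norm_complexConeKernel_le hα htt' hne (hz.symm ▸ hY))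
  simp only [complexConeKernel_ofReal] at integral_le
  rwa [modalKernel, norm_mul, Complex.norm_real, norm_of_nonneg (by positivity), one_div,
    inv_mul_le_iff₀ two_pi_pos]

theorem norm_modalKernel_zero_le (hα : cos α ≠ 0) (htt' : 0 ≤ t * t') (hne : t ≠ t') :
    ‖modalKernel α 0 t t'‖ ≤ 2 * |t'| / (cos α ^ 2 * |t - t'| ^ 3) := by
  have amgm : 2 * t * t' * cosh 0 ≤ t ^ 2 + t' ^ 2 := by
    simpa using two_mul_le_add_sq t t'
  convert norm_modalKernel_le_exp_mul hα htt' hne 0 amgm using 1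
  simp only [Int.cast_zero, zero_mul, exp_zero, cosh_zero]
  ring

theorem norm_modalKernel_le (hα : cos α ≠ 0) (ht' : 0 < t') (hlt : t' < t) (n : ℤ) :
    ‖modalKernel α n t t'‖ ≤ (t' / t) ^ n.natAbs * (2 * t / (cos α ^ 2 * (t - t') ^ 3)) := by
  have ht : 0 < t := ht'.trans hlt
  have gap_pos : 0 < t - t' := sub_pos.mpr hlt
  obtain ⟨Y, hnY, hcosh⟩ : ∃ Y : ℝ, n * Y = n.natAbs * -log (t / t') ∧
      cosh Y = cosh (log (t / t')) := by
    rcases Int.natAbs_eq n with hn | hn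
    · exact ⟨-log (t / t'), by rw [hn]; simp, cosh_neg _⟩
    · exact ⟨log (t / t'), by rw [hn]; simp, rfl⟩
  have edge : 2 * t * t' * cosh Y = t ^ 2 + t' ^ 2 := hcosh ▸ two_mul_mul_cosh_log_div ht ht'
  have exp_eq : exp (n * Y) = (t' / t) ^ n.natAbs := by
    rw [hnY, exp_nat_mul, exp_neg, exp_log (div_pos ht ht'), inv_div]
  have numerator_le : t' * (1 + cosh Y) ≤ 2 * t := by nlinarith
  have bound := norm_modalKernel_le_exp_mul hα (mul_pos ht ht').le hlt.ne' n edge.le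
  rw [exp_eq, abs_of_pos ht', abs_of_pos gap_pos] at bound
  exact bound.trans (by gcongr)

theorem modalKernel_decay_infinity_general (α : ℝ) {a : ℝ} (ha : 1 < a) :
    ∃ C : ℝ, 0 < C ∧ ∀ t t' : ℝ, 0 < t' → a * t' ≤ t →
      ‖modalKernel α 0 t t'‖ ≤ C * t' / t ^ 3 ∧
      ∀ n : ℤ, ‖modalKernel α n t t'‖ ≤ C * t' ^ n.natAbs / t ^ (n.natAbs + 2) := by
  by_cases hα : cos α = 0
  · refine ⟨1, one_pos, fun t t' ht' hat => ?_⟩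
    have ht : 0 < t := by nlinarith
    simp only [modalKernel_eq_zero_of_cos_eq_zero hα, norm_zero]
    exact ⟨by positivity, fun n => by positivity⟩
  have hb : 0 < 1 - a⁻¹ := sub_pos.mpr (inv_lt_one_of_one_lt₀ ha)
  refine ⟨2 / (cos α ^ 2 * (1 - a⁻¹) ^ 3), by positivity, fun t t' ht' hat => ?_⟩
  have hlt : t' < t := by nlinarith
  have ht : 0 < t := ht'.trans hlt
  have gap : (1 - a⁻¹) * t ≤ t - t' := by
    have : t' ≤ a⁻¹ * t := (le_inv_mul_iff₀ (one_pos.trans ha)).mpr hat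
    linarith
  constructor
  · have bound := norm_modalKernel_zero_le hα (mul_pos ht ht').le hlt.ne'
    rw [abs_of_pos ht', abs_of_pos (sub_pos.mpr hlt)] at bound
    calc ‖modalKernel α 0 t t'‖ ≤ 2 * t' / (cos α ^ 2 * (t - t') ^ 3) := bound
      _ ≤ 2 * t' / (cos α ^ 2 * ((1 - a⁻¹) * t) ^ 3) := by gcongr
      _ = 2 / (cos α ^ 2 * (1 - a⁻¹) ^ 3) * t' / t ^ 3 := by field_simp
  · intro n
    calc ‖modalKernel α n t t'‖
        ≤ (t' / t) ^ n.natAbs * (2 * t / (cos α ^ 2 * (t - t') ^ 3)) :=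
          norm_modalKernel_le hα ht' hlt n
      _ ≤ (t' / t) ^ n.natAbs * (2 * t / (cos α ^ 2 * ((1 - a⁻¹) * t) ^ 3)) := by gcongr
      _ = 2 / (cos α ^ 2 * (1 - a⁻¹) ^ 3) * t' ^ n.natAbs / t ^ (n.natAbs + 2) := by
          rw [div_pow, pow_add]
          field_simp

end ModalKernel

/-- Decay of the modal kernel at infinity: there is `C > 0`, depending only on `α`,
with `|K_0^α(t,1)| ≤ C t^{−3}` for `t ≥ 3/2`, and `|K_n^α(t,1)| ≤ C t^{−(|n|+2)}`
for `t ≥ 3/2` and `n ≠ 0`. -/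
theorem modalKernel_decay_infinity (α : ℝ) (hα0 : 0 < α) (hαπ : α < π) (hα2 : α ≠ π / 2) :
    ∃ C : ℝ, 0 < C ∧
      (∀ t : ℝ, 3 / 2 ≤ t → ‖modalKernel α 0 t 1‖ ≤ C / t ^ 3) ∧
      (∀ n : ℤ, n ≠ 0 → ∀ t : ℝ, 3 / 2 ≤ t →
        ‖modalKernel α n t 1‖ ≤ C / t ^ (n.natAbs + 2)) := by
  obtain ⟨C, hC, bound⟩ := modalKernel_decay_infinity_general α (a := 3 / 2) (by norm_num)
  exact ⟨C, hC, fun t ht => by simpa using (bound t 1 one_pos (by simpa using ht)).1,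
    fun n _ t ht => by simpa using (bound t 1 one_pos (by simpa using ht)).2 n⟩
end
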